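/- The graph 4K₂ + K₃ (the join of the disjoint union of four copies of K₂ with K₃) is 3-connected, has connectivity κ = 3 and minimum degree δ = 4, has no cycle of length at least 4δ − 2κ = 10, and has no dominating cycle. -/

import Mathlib

open SimpleGraph

/-- `S` is a cut-set: removing `S` leaves a disconnected or trivial graph. -/
def IsCutSet {V : Type*} (G : SimpleGraph V) (S : Set V) : Prop :=
  ¬ (G.induce Sᶜ).Connected ∨ Sᶜ.Subsingleton

/-- The connectivity `κ` of `G`. -/
noncomputable def kappa {V : Type*} (G : SimpleGraph V) : ℕ :=
  sInf {k | ∃ S : Set V, S.ncard = k ∧ IsCutSet G S}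

/-- The graph `4K₂ + K₃`: four disjoint edges (vertices `Sum.inl i`, paired by `i / 2`)
joined completely to a triangle (vertices `Sum.inr j`). -/
def G18 : SimpleGraph (Fin 8 ⊕ Fin 3) :=
  SimpleGraph.fromRel (fun a b =>
    match a, b with
    | Sum.inl i, Sum.inl j => i.val / 2 = j.val / 2
    | _, _ => True)

noncomputable instance : DecidableRel G18.Adj := Classical.decRel _

/-- The copy of `K₂` containing a vertex of `4K₂ + K₃`, or `none` for a vertex of the `K₃`. -/
def block : Fin 8 ⊕ Fin 3 → Option (Fin 4)
  | Sum.inl i => some ⟨i.val / 2, by omega⟩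
  | Sum.inr _ => none

theorem G18_adj_iff (a b : Fin 8 ⊕ Fin 3) :
    G18.Adj a b ↔ a ≠ b ∧ (a.isRight ∨ b.isRight ∨ block a = block b) := by
  rcases a with i | i <;> rcases b with j | j <;>
    simp [G18, SimpleGraph.fromRel_adj, block, eq_comm]

theorem G18_degree_eq (v : Fin 8 ⊕ Fin 3) :
    G18.degree v = (Finset.univ.filter fun w =>
      v ≠ w ∧ (v.isRight ∨ w.isRight ∨ block v = block w)).card := by
  rw [← SimpleGraph.card_neighborFinset_eq_degree]
  congr 1
  ext w
  simp [G18_adj_iff]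

theorem G18_minDegree : G18.minDegree = 4 := by
  apply le_antisymm
  · refine (G18.minDegree_le_degree (Sum.inl 0)).trans ?_
    rw [G18_degree_eq]
    decide
  · refine G18.le_minDegree_of_forall_le_degree 4 fun v => ?_
    rw [G18_degree_eq]
    revert v
    decide

theorem not_isCutSet_of_ncard_lt {S : Set (Fin 8 ⊕ Fin 3)} (hS : S.ncard < 3) :
    ¬ IsCutSet G18 S := by
  obtain ⟨j, hj⟩ : ∃ j : Fin 3, Sum.inr j ∉ S := by
    by_contra! h
    have hsub : Set.range (Sum.inr : Fin 3 → Fin 8 ⊕ Fin 3) ⊆ S := by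
      rintro _ ⟨j, rfl⟩
      exact h j
    have hle := Set.ncard_le_ncard hsub (Set.toFinite S)
    rw [Set.ncard_range_of_injective Sum.inr_injective] at hle
    simp at hle
    omega
  rintro (h | h)
  · apply h
    rw [SimpleGraph.connected_iff_exists_forall_reachable]
    refine ⟨⟨Sum.inr j, hj⟩, fun w => ?_⟩
    by_cases hw : (⟨Sum.inr j, hj⟩ : ↥Sᶜ) = w
    · rw [hw]
    · apply SimpleGraph.Adj.reachable
      rw [SimpleGraph.comap_adj, G18_adj_iff]
      exact ⟨fun e => hw (Subtype.ext e), Or.inl rfl⟩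
  · have h₁ : Sᶜ.ncard ≤ 1 := Set.ncard_le_one_iff_subsingleton.2 h
    have h₂ := Set.ncard_add_ncard_compl S
    simp at h₂
    omega

theorem isCutSet_range_inr : IsCutSet G18 (Set.range Sum.inr) := by
  refine Or.inl fun h => ?_
  have hconst : ∀ a b : ↥(Set.range (Sum.inr : Fin 3 → Fin 8 ⊕ Fin 3))ᶜ,
      (G18.induce _).Walk a b → block a = block b := by
    intro a b p
    induction p with
    | nil => rfl
    | @cons u v w hadj q ih =>
      rw [← ih]
      obtain ⟨u, hu⟩ := u
      obtain ⟨v, hv⟩ := v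
      rw [SimpleGraph.comap_adj, G18_adj_iff] at hadj
      rcases u with u | u
      · rcases v with v | v
        · simpa using hadj.2
        · exact absurd ⟨v, rfl⟩ hv
      · exact absurd ⟨u, rfl⟩ hu
  obtain ⟨p⟩ := h.preconnected ⟨Sum.inl 0, by simp⟩ ⟨Sum.inl 7, by simp⟩
  exact absurd (hconst _ _ p) (by decide)

theorem kappa_G18 : kappa G18 = 3 := by
  have hmem : (3 : ℕ) ∈ {k | ∃ S : Set (Fin 8 ⊕ Fin 3), S.ncard = k ∧ IsCutSet G18 S} :=
    ⟨_, by rw [Set.ncard_range_of_injective Sum.inr_injective]; simp, isCutSet_range_inr⟩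
  refine le_antisymm (Nat.sInf_le hmem) (le_csInf ⟨3, hmem⟩ ?_)
  rintro k ⟨S, rfl, hS⟩
  by_contra! hlt
  exact not_isCutSet_of_ncard_lt hlt hS

/-- The copies of `K₂` met by a list of vertices. -/
def blocks (l : List (Fin 8 ⊕ Fin 3)) : Finset (Fin 4) :=
  (l.filterMap block).toFinset

theorem mem_blocks {l : List (Fin 8 ⊕ Fin 3)} {i : Fin 4} :
    i ∈ blocks l ↔ ∃ v ∈ l, block v = some i := by
  simp [blocks]

theorem blocks_cons_inr (j : Fin 3) (l : List (Fin 8 ⊕ Fin 3)) :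
    blocks (Sum.inr j :: l) = blocks l := by
  rw [blocks, List.filterMap_cons_none rfl, blocks]

theorem card_blocks_cons_le (v : Fin 8 ⊕ Fin 3) (l : List (Fin 8 ⊕ Fin 3)) :
    (blocks (v :: l)).card ≤ (blocks l).card + 1 := by
  rcases v with i | j
  · simpa [blocks, block] using Finset.card_insert_le _ _
  · rw [blocks_cons_inr]
    omega

theorem blocks_cons_of_mem {v w : Fin 8 ⊕ Fin 3} {l : List (Fin 8 ⊕ Fin 3)} (hw : w ∈ l)
    (h : block v = block w) : blocks (v :: l) = blocks l := by
  ext i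
  simp only [mem_blocks, List.mem_cons, exists_eq_or_imp, or_iff_right_iff_imp]
  exact fun hi => ⟨w, hw, h ▸ hi⟩

/-- A walk ending in the `K₃` meets at most as many copies of `K₂` as it makes visits to the
`K₃`, not counting its start. -/
theorem card_blocks_support_le {u v : Fin 8 ⊕ Fin 3} (p : G18.Walk u v) (hv : v.isRight) :
    (blocks p.support).card + (if u.isRight then 1 else 0) ≤
      p.support.countP Sum.isRight := by
  induction p with
  | @nil u =>
    rcases u with i | j
    · simp at hv
    · simp [blocks, block]
  | @cons u w v h q ih =>
    have ih := ih hv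
    rw [SimpleGraph.Walk.support_cons, List.countP_cons]
    rcases u with i | j
    · rcases w with k | k
      · have hb : block (Sum.inl i) = block (Sum.inl k) := by
          simpa using ((G18_adj_iff _ _).1 h).2
        rw [blocks_cons_of_mem q.start_mem_support hb]
        simpa using ih
      · have := card_blocks_cons_le (Sum.inl i) q.support
        simp at ih ⊢
        omega
    · rw [blocks_cons_inr]
      simp
      omega

theorem countP_isRight_le {l : List (Fin 8 ⊕ Fin 3)} (hl : l.Nodup) :
    l.countP Sum.isRight ≤ 3 := by
  rw [List.countP_eq_length_filter, ← List.toFinset_card_of_nodup (hl.filter _)]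
  refine (Finset.card_le_card (t := Finset.univ.filter fun v => v.isRight) ?_).trans (by decide)
  intro v
  simp

theorem block_eq_of_mem_support {u v : Fin 8 ⊕ Fin 3} (p : G18.Walk u v)
    (hp : ∀ w ∈ p.support, ¬ w.isRight) : ∀ w ∈ p.support, block w = block u := by
  induction p with
  | nil => simp
  | @cons u w v h q ih =>
    simp only [SimpleGraph.Walk.support_cons, List.mem_cons, forall_eq_or_imp] at hp ⊢
    have hadj := ((G18_adj_iff _ _).1 h).2
    have hb : block u = block w := by
      simpa [hp.1, hp.2 w q.start_mem_support] using hadj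
    exact ⟨trivial, fun x hx => (ih hp.2 x hx).trans hb.symm⟩

theorem exists_block_not_mem_cycle {x : Fin 8 ⊕ Fin 3} {C : G18.Walk x x} (hC : C.IsCycle) :
    ∃ i : Fin 4, ∀ v ∈ C.support, block v ≠ some i := by
  suffices h : (blocks C.support).card ≤ 3 by
    obtain ⟨i, hi⟩ : ∃ i, i ∉ blocks C.support := by
      by_contra! hall
      rw [Finset.eq_univ_of_forall hall] at h
      simp at h
    exact ⟨i, fun v hv hvi => hi (mem_blocks.2 ⟨v, hv, hvi⟩)⟩
  by_cases hr : ∃ y ∈ C.support, y.isRight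
  · obtain ⟨y, hy, hyr⟩ := hr
    have hsub : blocks C.support = blocks (C.rotate y hy).support := by
      ext i
      simp [mem_blocks]
    have hle := card_blocks_support_le (C.rotate y hy) hyr
    have hcount := countP_isRight_le (hC.rotate hy).support_nodup
    rw [← hsub, ← (C.rotate y hy).cons_tail_support, List.countP_cons] at hle
    simp only [hyr, if_true] at hle
    omega
  · push Not at hr
    have hb := block_eq_of_mem_support C (by simpa using hr)
    refine (Finset.card_le_one.2 fun i hi j hj => ?_).trans (by norm_num)
    obtain ⟨v, hv, hvi⟩ := mem_blocks.1 hi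
    obtain ⟨w, hw, hwj⟩ := mem_blocks.1 hj
    exact Option.some_injective _ (by rw [← hvi, ← hwj, hb v hv, hb w hw])

/-- `4K₂ + K₃` is 3-connected with κ = 3 and δ = 4, has no cycle of
length at least 4δ - 2κ = 10, and has no dominating cycle. -/
theorem stmt18 :
    kappa G18 = 3 ∧ G18.minDegree = 4 ∧
    (∀ (x : Fin 8 ⊕ Fin 3) (C : G18.Walk x x), C.IsCycle → C.length < 10) ∧
    ¬ ∃ (x : Fin 8 ⊕ Fin 3) (C : G18.Walk x x), C.IsCycle ∧
        ∀ a b, a ∉ C.support → b ∉ C.support → ¬ G18.Adj a b := by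
  refine ⟨kappa_G18, G18_minDegree, fun x C hC => ?_, ?_⟩
  · obtain ⟨i, hi⟩ := exists_block_not_mem_cycle hC
    have hcard : (Finset.univ.filter fun v => block v ≠ some i).card < 10 := by
      clear hi
      revert i
      decide
    have hlen : C.support.tail.length = C.length := by simp
    rw [← hlen, ← List.toFinset_card_of_nodup hC.support_nodup]
    refine (Finset.card_le_card fun v hv => ?_).trans_lt hcard
    simpa using hi v (List.mem_of_mem_tail (List.mem_toFinset.1 hv))
  · rintro ⟨x, C, hC, hdom⟩
    obtain ⟨i, hi⟩ := exists_block_not_mem_cycle hC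
    obtain ⟨a, b, hab, ha, hb⟩ : ∃ a b, a ≠ b ∧ block a = some i ∧ block b = some i := by
      clear hi
      revert i
      decide
    exact hdom a b (fun h => hi a h ha) (fun h => hi b h hb)
      ((G18_adj_iff a b).2 ⟨hab, Or.inr (Or.inr (ha.trans hb.symm))⟩)
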